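/- Let N = M ≥ 2 and t, τ ∈ ℝ, and consider the softmax reward with inner temperature t and outer temperature τ. (a) The spread allocation, in which agent i puts its entire effort on task i (r_{ii} = 1, r_{ij} = 0 for j ≠ i), yields task scores T_j = σ(t,N) for every j and team reward R = σ(t,N). (b) The trivial allocation, in which every agent puts its entire effort on task 1, yields team reward R = σ(τ,N). Consequently R_het ≥ max{σ(t,N), σ(τ,N)}, where σ(t,N) = e^t/(e^t + N − 1). -/

import Mathlib

open Finset

/-- An N×M allocation matrix is admissible if all entries are nonnegative and
every agent's (row's) efforts sum to 1. -/
def Admissible {N M : ℕ} (A : Fin N → Fin M → ℝ) : Prop :=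
  (∀ i j, 0 ≤ A i j) ∧ ∀ i, ∑ j, A i j = 1

/-- An allocation is homogeneous if all rows coincide. -/
def Homogeneous {N M : ℕ} (A : Fin N → Fin M → ℝ) : Prop :=
  ∀ i i' : Fin N, A i = A i'

/-- The column of task `j`. -/
def col {N M : ℕ} (A : Fin N → Fin M → ℝ) (j : Fin M) : Fin N → ℝ :=
  fun i => A i j

/-- Softmax inner aggregator with temperature `t`: the task score
`T_j(A) = Σ_i (e^{t·r_{ij}} / Σ_ℓ e^{t·r_{ℓj}}) · r_{ij}` applied to a column. -/
noncomputable def innerScore (t : ℝ) {N : ℕ} (a : Fin N → ℝ) : ℝ :=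
  ∑ i, Real.exp (t * a i) / (∑ l, Real.exp (t * a l)) * a i

/-- Softmax team reward with inner temperature `t` and outer temperature `τ`:
`R(A) = Σ_j (e^{τ·T_j} / Σ_ℓ e^{τ·T_ℓ}) · T_j`. -/
noncomputable def softReward (t τ : ℝ) {N : ℕ} (A : Fin N → Fin N → ℝ) : ℝ :=
  ∑ j, Real.exp (τ * innerScore t (col A j)) /
      (∑ l, Real.exp (τ * innerScore t (col A l))) * innerScore t (col A j)

/-- `σ(t,N) = e^t / (e^t + N − 1)`. -/
noncomputable def sigma' (t : ℝ) (N : ℕ) : ℝ :=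
  Real.exp t / (Real.exp t + N - 1)

/-- Heterogeneity gain `ΔR(t,τ;N) = R_het − R_hom` for the softmax reward. -/
noncomputable def hetGain (t τ : ℝ) (N : ℕ) : ℝ :=
  sSup {r : ℝ | ∃ A : Fin N → Fin N → ℝ, Admissible A ∧ softReward t τ A = r} -
    sSup {r : ℝ | ∃ A : Fin N → Fin N → ℝ,
      Admissible A ∧ Homogeneous A ∧ softReward t τ A = r}

theorem innerScore_const (t c : ℝ) {N : ℕ} (hN : N ≠ 0) :
    innerScore t (fun _ : Fin N => c) = c := by
  have hN' : (N : ℝ) ≠ 0 := Nat.cast_ne_zero.mpr hN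
  have he := Real.exp_ne_zero (t * c)
  simp only [innerScore, sum_const, card_univ, Fintype.card_fin, nsmul_eq_mul]
  field_simp

theorem innerScore_indicator (t : ℝ) {N : ℕ} (k : Fin N) :
    innerScore t (fun i => if i = k then (1 : ℝ) else 0) = sigma' t N := by
  have hsum : ∑ l : Fin N, Real.exp (t * if l = k then (1 : ℝ) else 0) =
      Real.exp t + N - 1 := by
    have h : ∀ l : Fin N, Real.exp (t * if l = k then (1 : ℝ) else 0) =
        (if l = k then Real.exp t - 1 else 0) + 1 := by
      intro l
      split_ifs <;> simp
    simp only [h, sum_add_distrib, sum_ite_eq', mem_univ, if_true, sum_const, card_univ,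
      Fintype.card_fin, nsmul_eq_mul]
    ring
  simp only [innerScore, hsum]
  simp [sigma']

theorem innerScore_le (t : ℝ) {N : ℕ} (hN : N ≠ 0) {a : Fin N → ℝ} {c : ℝ}
    (ha : ∀ i, a i ≤ c) : innerScore t a ≤ c := by
  have : Nonempty (Fin N) := ⟨⟨0, Nat.pos_of_ne_zero hN⟩⟩
  have hpos : 0 < ∑ l, Real.exp (t * a l) :=
    sum_pos (fun _ _ => Real.exp_pos _) univ_nonempty
  calc innerScore t a ≤ ∑ i, Real.exp (t * a i) / (∑ l, Real.exp (t * a l)) * c :=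
        sum_le_sum fun i _ => mul_le_mul_of_nonneg_left (ha i) (by positivity)
    _ = c := by rw [← sum_mul, ← sum_div, div_self hpos.ne', one_mul]

theorem softReward_eq_innerScore (t τ : ℝ) {N : ℕ} (A : Fin N → Fin N → ℝ) :
    softReward t τ A = innerScore τ (fun j => innerScore t (col A j)) :=
  rfl

theorem Admissible.le_one {N M : ℕ} {A : Fin N → Fin M → ℝ} (hA : Admissible A)
    (i : Fin N) (j : Fin M) : A i j ≤ 1 :=
  hA.2 i ▸ single_le_sum (fun j' _ => hA.1 i j') (mem_univ j)

theorem bddAbove_softReward (t τ : ℝ) {N : ℕ} (hN : N ≠ 0) :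
    BddAbove {r : ℝ | ∃ A : Fin N → Fin N → ℝ, Admissible A ∧ softReward t τ A = r} := by
  refine ⟨1, ?_⟩
  rintro _ ⟨A, hA, rfl⟩
  exact innerScore_le τ hN fun j => innerScore_le t hN fun i => hA.le_one i j

/-- for the softmax reward with `N = M ≥ 2`:
(a) the spread allocation (agent `i` puts all effort on task `i`) gives every
task score equal to `σ(t,N)` and team reward `σ(t,N)`;
(b) the trivial allocation (every agent on task 1) gives team reward `σ(τ,N)`.
Consequently `R_het ≥ max{σ(t,N), σ(τ,N)}`. -/
theorem stmt8 (N : ℕ) (hN : 2 ≤ N) (t τ : ℝ) :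
    (∀ j : Fin N,
        innerScore t (col (fun i j' : Fin N => if i = j' then (1 : ℝ) else 0) j) =
          sigma' t N) ∧
    softReward t τ (fun i j : Fin N => if i = j then (1 : ℝ) else 0) = sigma' t N ∧
    softReward t τ
        (fun (_ : Fin N) (j : Fin N) => if j = (⟨0, by omega⟩ : Fin N) then (1 : ℝ) else 0) =
      sigma' τ N ∧
    max (sigma' t N) (sigma' τ N) ≤
      sSup {r : ℝ | ∃ A : Fin N → Fin N → ℝ, Admissible A ∧ softReward t τ A = r} := by
  have hN0 : N ≠ 0 := by omega
  have hscore : ∀ j : Fin N,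
      innerScore t (col (fun i j' : Fin N => if i = j' then (1 : ℝ) else 0) j) =
        sigma' t N := fun j => innerScore_indicator t j
  have hspread : softReward t τ (fun i j : Fin N => if i = j then (1 : ℝ) else 0) =
      sigma' t N := by
    simp only [softReward_eq_innerScore, hscore, innerScore_const τ _ hN0]
  have htrivial : softReward t τ
      (fun (_ : Fin N) (j : Fin N) => if j = (⟨0, by omega⟩ : Fin N) then (1 : ℝ) else 0) =
        sigma' τ N := by
    rw [softReward_eq_innerScore, ← innerScore_indicator τ ⟨0, by omega⟩]
    exact congrArg (innerScore τ) (funext fun j => innerScore_const t _ hN0)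
  refine ⟨hscore, hspread, htrivial, max_le ?_ ?_⟩
  · refine le_csSup (bddAbove_softReward t τ hN0) ⟨_, ⟨fun i j => ?_, fun i => ?_⟩, hspread⟩
    · split_ifs <;> norm_num
    · simp
  · refine le_csSup (bddAbove_softReward t τ hN0) ⟨_, ⟨fun i j => ?_, fun i => ?_⟩, htrivial⟩
    · split_ifs <;> norm_num
    · simp
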